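/- For every real number x > 1 that is not an integer, the integral over t ∈ (−∞, ∞) of (1/(1 + cosh(t)))·[(x−1)/(t² + (x−1)²π²) − (x+1)/(t² + (x+1)²π²)] dt equals −(8/π²) · Σ_{k=1}^∞ [ (2k−1)(x−1)/(((x−1)² − (2k−1)²)²) − (2k−1)(x+1)/(((x+1)² − (2k−1)²)²) ]. -/

import Mathlib

open Real

lemma aux_taylor (S : Set ℂ) (hS : IsOpen S) (h0 : (0:ℂ) ∈ S) (f : ℂ → ℂ)
    (hf : DifferentiableOn ℂ f S) :
    ∃ w : ℂ → ℂ, DifferentiableOn ℂ w S ∧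
      ∀ z, f z = f 0 + z * deriv f 0 + z ^ 2 * w z := by
  have hn : S ∈ nhds (0:ℂ) := hS.mem_nhds h0
  refine ⟨dslope (dslope f 0) 0, ?_, ?_⟩
  · rw [Complex.differentiableOn_dslope hn, Complex.differentiableOn_dslope hn]
    exact hf
  · intro z
    have h1 := sub_smul_dslope f 0 z
    have h2 := sub_smul_dslope (dslope f 0) 0 z
    rw [dslope_same] at h2
    simp only [sub_zero, smul_eq_mul] at h1 h2
    linear_combination -h1 - z * h2

lemma aux_k : ∃ s : ℂ → ℂ, Differentiable ℂ s ∧ s 0 = 1 / 2 ∧ HasDerivAt s 0 0 ∧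
    ∀ z, Complex.cosh z - 1 = z ^ 2 * (2 * s z ^ 2) := by
  set g : ℂ → ℂ := fun z => Complex.sinh (z / 2) with hg
  have hgd : Differentiable ℂ g := by
    rw [hg]; fun_prop
  set s := dslope g 0 with hs
  have hsd : Differentiable ℂ s := by
    rw [← differentiableOn_univ, hs, Complex.differentiableOn_dslope Filter.univ_mem]
    exact hgd.differentiableOn
  have hmul : ∀ z, z * s z = Complex.sinh (z / 2) := by
    intro z
    have h1 := sub_smul_dslope g 0 z
    simpa [hg] using h1
  have heven : ∀ z, s (-z) = s z := by
    intro z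
    rcases eq_or_ne z 0 with rfl | hz
    · simp
    · have h1 := hmul z
      have h2 := hmul (-z)
      rw [neg_div, Complex.sinh_neg] at h2
      have : z * s (-z) = z * s z := by linear_combination -h1 - h2
      exact mul_left_cancel₀ hz this
  refine ⟨s, hsd, ?_, ?_, ?_⟩
  · rw [hs, dslope_same]
    have : HasDerivAt g (Complex.cosh (0 / 2) * (1 / 2)) 0 :=
      ((hasDerivAt_id (0:ℂ)).div_const 2).csinh
    rw [this.deriv]; simp
  · have h1 : HasDerivAt s (deriv s 0) 0 := (hsd 0).hasDerivAt
    have h2 : deriv (fun z => s (-z)) 0 = - deriv s (-0) := deriv_comp_neg s 0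
    have h3 : (fun z => s (-z)) = s := funext heven
    rw [h3, neg_zero] at h2
    have h4 : deriv s 0 = 0 := by
      have : 2 * deriv s 0 = 0 := by linear_combination h2
      simpa using this
    rwa [h4] at h1
  · intro z
    have h1 := Complex.cosh_two_mul (z / 2)
    have h2 := Complex.cosh_sq (z / 2)
    rw [mul_div_cancel₀ z two_ne_zero] at h1
    have h3 := hmul z
    rw [h1, h2, ← h3]; ring

def auxS (x : ℝ) : Set ℂ := {z | -(π * x) < z.im ∧ -(2 * π) < z.im ∧ z.im < 2 * π}

lemma aux_cosh_ne {z : ℂ} (h1 : -(2 * π) < z.im) (h2 : z.im < 2 * π) (hz : z ≠ 0) :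
    Complex.cosh z ≠ 1 := by
  intro h
  rw [← Complex.cos_mul_I, Complex.cos_eq_one_iff] at h
  obtain ⟨n, hn⟩ := h
  have hre := congrArg Complex.re hn
  have him := congrArg Complex.im hn
  simp at hre him
  have hp := Real.pi_pos
  have a1 : (n:ℝ) < 1 := by nlinarith
  have a2 : (-1:ℝ) < n := by nlinarith
  have b1 : n < 1 := by exact_mod_cast a1
  have b2 : -1 < n := by exact_mod_cast a2
  have b3 : n = 0 := by omega
  apply hz
  apply Complex.ext
  · simp [← him]
  · simp [b3] at hre; simp [hre]

lemma aux_w (x : ℝ) (hx : 1 < x) : ∃ w : ℂ → ℂ, DifferentiableOn ℂ w (auxS x) ∧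
    ∀ z ∈ auxS x, z ≠ 0 → w z = 1 / (z + π * x * Complex.I) / (1 - Complex.cosh z)
      + 2 / (π * x * Complex.I) / z ^ 2 + 2 / (π ^ 2 * x ^ 2) / z := by
  obtain ⟨s, hsd, hs0, hsd0, hs⟩ := aux_k
  have hp := Real.pi_pos
  have hS : IsOpen (auxS x) := by
    unfold auxS
    exact (isOpen_lt continuous_const Complex.continuous_im).inter
      ((isOpen_lt continuous_const Complex.continuous_im).inter
      (isOpen_lt Complex.continuous_im continuous_const))
  have h0 : (0:ℂ) ∈ auxS x := by
    refine ⟨?_, ?_, ?_⟩ <;> simp <;> positivity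
  have hsne : ∀ z ∈ auxS x, s z ≠ 0 := by
    intro z hz h
    rcases eq_or_ne z 0 with rfl | hz0
    · rw [hs0] at h; norm_num at h
    · have := hs z
      rw [h] at this
      exact aux_cosh_ne hz.2.1 hz.2.2 hz0 (by linear_combination this)
  have hφ : ∀ z ∈ auxS x, z + π * x * Complex.I ≠ 0 := by
    intro z hz h
    have := congrArg Complex.im h
    simp at this
    have := hz.1
    linarith
  set u : ℂ → ℂ := fun z => -1 / ((z + π * x * Complex.I) * (2 * s z ^ 2)) with hu
  have hne : ∀ z ∈ auxS x, (z + π * x * Complex.I) * (2 * s z ^ 2) ≠ 0 := fun z hz =>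
    mul_ne_zero (hφ z hz) (mul_ne_zero two_ne_zero (pow_ne_zero _ (hsne z hz)))
  have hud : DifferentiableOn ℂ u (auxS x) := by
    intro z hz
    have := hsd z
    have h := hne z hz
    apply DifferentiableAt.differentiableWithinAt
    rw [hu]
    refine DifferentiableAt.div (by fun_prop) (by fun_prop) h
  obtain ⟨w, hw, hwz⟩ := aux_taylor _ hS h0 u hud
  refine ⟨w, hw, ?_⟩
  have hpc : (π : ℂ) ≠ 0 := by exact_mod_cast hp.ne'
  have hxc : (x : ℂ) ≠ 0 := by
    have : x ≠ 0 := by linarith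
    exact_mod_cast this
  have hI := Complex.I_ne_zero
  have hu0 : u 0 = -2 / (π * x * Complex.I) := by
    simp only [hu, hs0]
    field_simp
    norm_num
  have hu1 : deriv u 0 = -2 / (π ^ 2 * x ^ 2) := by
    have hd : HasDerivAt u _ 0 :=
      (hasDerivAt_const (0:ℂ) (-1:ℂ)).div
        (((hasDerivAt_id (0:ℂ)).add_const (π * x * Complex.I)).mul ((hsd0.pow 2).const_mul 2))
        (hne 0 h0)
    rw [hd.deriv]
    simp [hs0]
    field_simp
    simp
  intro z hz hz0
  have h1 := hwz z
  rw [hu0, hu1] at h1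
  have h2 : 1 - Complex.cosh z = - (z ^ 2 * (2 * s z ^ 2)) := by rw [← hs]; ring
  rw [h2]
  have h3 := hφ z hz
  have h4 := hsne z hz
  have h5 : w z = (u z - (-2 / (π * x * Complex.I)) - z * (-2 / (π ^ 2 * x ^ 2))) / z ^ 2 := by
    rw [eq_div_iff (pow_ne_zero _ hz0)]
    linear_combination -h1
  rw [h5]
  simp only [hu]
  generalize z + π * x * Complex.I = a at *
  field_simp
  ring

lemma aux_series (x : ℝ) (hxint : ∀ m : ℤ, x ≠ m) :
    HasSum (fun k : ℕ => ((2 * (k : ℝ) + 1) * (x - 1) / ((x - 1) ^ 2 - (2 * (k : ℝ) + 1) ^ 2) ^ 2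
            - (2 * (k : ℝ) + 1) * (x + 1) / ((x + 1) ^ 2 - (2 * (k : ℝ) + 1) ^ 2) ^ 2))
      (-(1 / (2 * x ^ 2))) := by
  set a : ℕ → ℝ := fun k => 1 / ((k:ℝ) + (-(x/2))) ^ 2 + 1 / ((k:ℝ) + x / 2) ^ 2 with ha
  have hsum : ∀ b : ℝ, Summable (fun k : ℕ => 1 / ((k:ℝ) + b) ^ 2) := by
    intro b
    have := (Real.summable_one_div_nat_add_rpow b 2).mpr (by norm_num)
    simpa using this
  have h1 : HasSum a (∑' k, a k) := ((hsum _).add (hsum _)).hasSum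
  have h2 : HasSum (fun k => a (k + 1)) (∑' k, a k - a 0) := by
    have := (hasSum_nat_add_iff' (f := a) 1).mpr h1
    simpa using this
  have h3 := (h2.sub h1).mul_left (1/16)
  have hx0 : x ≠ 0 := by simpa using hxint 0
  have E1 : ∀ k : ℕ, ((2 * (k : ℝ) + 1) * (x - 1) / ((x - 1) ^ 2 - (2 * (k : ℝ) + 1) ^ 2) ^ 2
            - (2 * (k : ℝ) + 1) * (x + 1) / ((x + 1) ^ 2 - (2 * (k : ℝ) + 1) ^ 2) ^ 2) =
      1 / 16 * (a (k + 1) - a k) := by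
    intro k
    have e1 : x - 2 * k ≠ 0 := by
      have := hxint (2 * k); push_cast at this
      exact sub_ne_zero.mpr this
    have e2 : x + 2 * k ≠ 0 := by
      have := hxint (-(2 * k)); push_cast at this
      intro h; apply this; linarith
    have e3 : x - 2 * (k + 1) ≠ 0 := by
      have := hxint (2 * (k + 1)); push_cast at this
      exact sub_ne_zero.mpr this
    have e4 : x + 2 * (k + 1) ≠ 0 := by
      have := hxint (-(2 * (k + 1))); push_cast at this
      intro h; apply this; linarith
    have r1 : (x - 1) ^ 2 - (2 * (k:ℝ) + 1) ^ 2 = (x - 2 * (k + 1)) * (x + 2 * k) := by ring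
    have r2 : (x + 1) ^ 2 - (2 * (k:ℝ) + 1) ^ 2 = (x - 2 * k) * (x + 2 * (k + 1)) := by ring
    have q1 : (k:ℝ) + (-(x/2)) = -(x - 2 * k) / 2 := by ring
    have q2 : (k:ℝ) + x / 2 = (x + 2 * k) / 2 := by ring
    have q3 : ((k + 1 : ℕ):ℝ) + (-(x/2)) = -(x - 2 * (k + 1)) / 2 := by push_cast; ring
    have q4 : ((k + 1 : ℕ):ℝ) + x / 2 = (x + 2 * (k + 1)) / 2 := by push_cast; ring
    simp only [ha]
    rw [r1, r2, q1, q2, q3, q4]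
    field_simp
    ring
  have E2 : -(1 / (2 * x ^ 2)) = 1 / 16 * (∑' (k : ℕ), a k - a 0 - ∑' (k : ℕ), a k) := by
    have : a 0 = 8 / x ^ 2 := by
      simp only [ha, Nat.cast_zero, zero_add, neg_sq]
      field_simp
      norm_num
    rw [this]
    field_simp
    ring
  rw [E2, funext E1]
  exact h3

lemma aux_int (c : ℝ) (hc : 0 < c) : MeasureTheory.Integrable (fun t : ℝ => 1 / (t ^ 2 + c ^ 2)) ∧
    ∫ t : ℝ, 1 / (t ^ 2 + c ^ 2) = π / c := by
  have h : (fun t : ℝ => 1 / (t ^ 2 + c ^ 2)) = fun t => (1 / c ^ 2) * (1 + (t / c) ^ 2)⁻¹ := by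
    funext t
    field_simp
    ring
  rw [h]
  constructor
  · exact (integrable_inv_one_add_sq.comp_div hc.ne').const_mul _
  · rw [MeasureTheory.integral_const_mul,
      MeasureTheory.Measure.integral_comp_div (fun t : ℝ => (1 + t ^ 2)⁻¹) c,
      integral_univ_inv_one_add_sq, abs_of_pos hc, smul_eq_mul]
    field_simp

lemma aux_F_int (x : ℝ) (hx : 1 < x) : MeasureTheory.Integrable (fun t : ℝ => (1 / (1 + Real.cosh t)) *
        ((x - 1) / (t ^ 2 + (x - 1) ^ 2 * π ^ 2) - (x + 1) / (t ^ 2 + (x + 1) ^ 2 * π ^ 2))) := by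
  have hp := Real.pi_pos
  have h1 := ((aux_int ((x - 1) * π) (mul_pos (by linarith) hp)).1.const_mul (x - 1))
  have h2 := ((aux_int ((x + 1) * π) (mul_pos (by linarith) hp)).1.const_mul (x + 1))
  have h3 := h1.sub h2
  have h4 : Continuous (fun t : ℝ => 1 / (1 + Real.cosh t)) := by
    refine Continuous.div continuous_const (continuous_const.add Real.continuous_cosh) ?_
    intro t; have := Real.cosh_pos t; positivity
  have h5 := h3.bdd_mul (c := 1) h4.aestronglyMeasurable (by
    refine Filter.Eventually.of_forall fun t => ?_
    have := Real.cosh_pos t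
    rw [Real.norm_of_nonneg (by positivity), div_le_one (by positivity)]
    linarith)
  refine h5.congr (Filter.Eventually.of_forall fun t => ?_)
  simp only [Pi.sub_apply, mul_pow, mul_one_div]

lemma aux_pt (x : ℝ) (hx : 1 < x) (w : ℂ → ℂ)
    (hw : ∀ z ∈ auxS x, z ≠ 0 → w z = 1 / (z + π * x * Complex.I) / (1 - Complex.cosh z)
      + 2 / (π * x * Complex.I) / z ^ 2 + 2 / (π ^ 2 * x ^ 2) / z) (t : ℝ) :
    (Complex.I / π * (w (t + (-π : ℝ) * Complex.I) - w (t + (π:ℝ) * Complex.I))).re =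
    (1 / (1 + Real.cosh t)) *
        ((x - 1) / (t ^ 2 + (x - 1) ^ 2 * π ^ 2) - (x + 1) / (t ^ 2 + (x + 1) ^ 2 * π ^ 2))
      - 4 / (π ^ 2 * x ^ 2) * (1 / (t ^ 2 + π ^ 2)) := by
  have hp := Real.pi_pos
  have m1 : (t + (-π : ℝ) * Complex.I : ℂ) ∈ auxS x := by
    refine ⟨?_, ?_, ?_⟩ <;> simp <;> nlinarith
  have m2 : (t + (π : ℝ) * Complex.I : ℂ) ∈ auxS x := by
    refine ⟨?_, ?_, ?_⟩ <;> simp <;> nlinarith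
  have n1 : (t + (-π : ℝ) * Complex.I : ℂ) ≠ 0 := by
    intro h; have := congrArg Complex.im h; simp at this
  have n2 : (t + (π : ℝ) * Complex.I : ℂ) ≠ 0 := by
    intro h; have := congrArg Complex.im h; simp at this
  have c2 : Complex.cosh (t + (π : ℝ) * Complex.I) = - (Real.cosh t : ℂ) := by
    rw [Complex.cosh_add, Complex.cosh_mul_I, Complex.sinh_mul_I]; simp
  have c1 : Complex.cosh (t + (-π : ℝ) * Complex.I) = - (Real.cosh t : ℂ) := by
    rw [Complex.cosh_add, Complex.cosh_mul_I, Complex.sinh_mul_I]; simp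
  have inv : ∀ b : ℝ, b ≠ 0 → (1 : ℂ) / (t + b * Complex.I) =
      (t - b * Complex.I) / ((t ^ 2 + b ^ 2 : ℝ) : ℂ) := by
    intro b hb
    have h1 : (t + b * Complex.I : ℂ) ≠ 0 := by
      intro h; have := congrArg Complex.im h; simp at this; exact hb this
    have h2 : ((t ^ 2 + b ^ 2 : ℝ) : ℂ) ≠ 0 := by
      have : t ^ 2 + b ^ 2 ≠ 0 := by positivity
      exact_mod_cast this
    rw [div_eq_div_iff h1 h2]
    push_cast
    linear_combination ((b:ℂ)^2) * Complex.I_sq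
  have hx0 : 0 < x := by linarith
  have hx1 : 0 < x - 1 := by linarith
  rw [hw _ m1 n1, hw _ m2 n2, c1, c2]
  have e1 : (t + (-π : ℝ) * Complex.I + π * x * Complex.I : ℂ) = t + ((x - 1) * π : ℝ) * Complex.I := by
    push_cast; ring
  have e2 : (t + (π : ℝ) * Complex.I + π * x * Complex.I : ℂ) = t + ((x + 1) * π : ℝ) * Complex.I := by
    push_cast; ring
  have i1 := inv _ (neg_ne_zero.mpr hp.ne')
  have i2 := inv _ hp.ne'
  rw [e1, e2, inv _ (mul_pos hx1 hp).ne', inv ((x + 1) * π) (by positivity)]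
  have d1 : ∀ c z : ℂ, c / z ^ 2 = c * (1 / z) ^ 2 := by intro c z; ring
  have d2 : ∀ c z : ℂ, c / z = c * (1 / z) := by intro c z; ring
  rw [d1 _ (t + (-π : ℝ) * Complex.I : ℂ), d1 _ (t + (π : ℝ) * Complex.I : ℂ),
    d2 (2 / (π ^ 2 * x ^ 2)) (t + (-π : ℝ) * Complex.I : ℂ),
    d2 (2 / (π ^ 2 * x ^ 2)) (t + (π : ℝ) * Complex.I : ℂ), i1, i2]
  have hA : 0 < t ^ 2 + ((x - 1) * π) ^ 2 := by positivity
  have hB : 0 < t ^ 2 + ((x + 1) * π) ^ 2 := by positivity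
  have hD : 0 < t ^ 2 + π ^ 2 := by positivity
  have hC : 0 < 1 + Real.cosh t := by have := Real.cosh_pos t; linarith
  rw [neg_sq, ← mul_pow (x - 1) π, ← mul_pow (x + 1) π, sub_neg_eq_add]
  have hc' : (1 : ℂ) + (Real.cosh t : ℂ) = ((1 + Real.cosh t : ℝ) : ℂ) := by push_cast; ring
  rw [hc']
  have key : ∀ A B D C : ℝ, A ≠ 0 → B ≠ 0 → D ≠ 0 → C ≠ 0 →
     (Complex.I / π * ((t - ((x - 1) * π : ℝ) * Complex.I) / (A:ℂ) / (C:ℂ)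
       + 2 / (π * x * Complex.I) * ((t - (-π : ℝ) * Complex.I) / (D:ℂ)) ^ 2
       + 2 / (π ^ 2 * x ^ 2) * ((t - (-π : ℝ) * Complex.I) / (D:ℂ))
       - ((t - ((x + 1) * π : ℝ) * Complex.I) / (B:ℂ) / (C:ℂ)
       + 2 / (π * x * Complex.I) * ((t - (π : ℝ) * Complex.I) / (D:ℂ)) ^ 2
       + 2 / (π ^ 2 * x ^ 2) * ((t - (π : ℝ) * Complex.I) / (D:ℂ))))) =
     ((1 / C * ((x - 1) / A - (x + 1) / B) - 4 / (π ^ 2 * x ^ 2) * (1 / D) : ℝ) : ℂ)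
      + ((t / π / C * (1 / A - 1 / B) + 8 * t / (π * x * D ^ 2) : ℝ) : ℂ) * Complex.I := by
    intro A B D C hA hB hD hC
    have hA' : (A:ℂ) ≠ 0 := by exact_mod_cast hA
    have hB' : (B:ℂ) ≠ 0 := by exact_mod_cast hB
    have hD' : (D:ℂ) ≠ 0 := by exact_mod_cast hD
    have hC' : (C:ℂ) ≠ 0 := by exact_mod_cast hC
    have hp' : (π:ℂ) ≠ 0 := by exact_mod_cast hp.ne'
    have hx' : (x:ℂ) ≠ 0 := by exact_mod_cast hx0.ne'
    have hI := Complex.I_ne_zero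
    push_cast
    field_simp
    ring_nf
    simp only [Complex.I_sq]
    ring
  rw [key _ _ _ _ hA.ne' hB.ne' hD.ne' hC.ne']
  simp only [Complex.add_re, Complex.ofReal_re, Complex.re_ofReal_mul, Complex.I_re, mul_zero, add_zero]

lemma aux_norm_cosh {z : ℂ} (h : 4 ≤ |z.re|) : |z.re| ≤ ‖1 - Complex.cosh z‖ := by
  have key : ∀ z : ℂ, 4 ≤ z.re → z.re ≤ ‖1 - Complex.cosh z‖ := by
    intro z hz
    have h1 : Complex.exp z = 2 * (1 - (1 - Complex.cosh z)) - Complex.exp (-z) := by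
      rw [Complex.cosh]; ring
    have h2 : ‖Complex.exp z‖ ≤ 2 * (1 + ‖1 - Complex.cosh z‖) + ‖Complex.exp (-z)‖ := by
      conv_lhs => rw [h1]
      refine (norm_sub_le _ _).trans ?_
      gcongr
      rw [norm_mul]
      have := norm_sub_le (1:ℂ) (1 - Complex.cosh z)
      simp only [norm_one, Complex.norm_ofNat] at this ⊢
      linarith
    rw [Complex.norm_exp, Complex.norm_exp] at h2
    have h3 : Real.exp (-z).re ≤ 1 := by
      rw [Real.exp_le_one_iff, Complex.neg_re]; linarith
    have h4 := Real.quadratic_le_exp_of_nonneg (x := z.re) (by linarith)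
    nlinarith
  rcases le_total 0 z.re with h0 | h0
  · rw [abs_of_nonneg h0] at h ⊢
    exact key z h
  · rw [abs_of_nonpos h0] at h ⊢
    have := key (-z) (by simpa using h)
    simpa using this

lemma aux_bound (x : ℝ) (hx : 1 < x) (w : ℂ → ℂ)
    (hw : ∀ z ∈ auxS x, z ≠ 0 → w z = 1 / (z + π * x * Complex.I) / (1 - Complex.cosh z)
      + 2 / (π * x * Complex.I) / z ^ 2 + 2 / (π ^ 2 * x ^ 2) / z) :
    ∃ C : ℝ, ∀ z : ℂ, 4 ≤ |z.re| → |z.im| ≤ π → ‖w z‖ ≤ C / |z.re| := by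
  have hp := Real.pi_pos
  refine ⟨1 / (π * (x - 1)) + ‖(2 / (π * x * Complex.I) : ℂ)‖ + ‖(2 / (π ^ 2 * x ^ 2) : ℂ)‖, ?_⟩
  intro z h4 hi
  obtain ⟨hi1, hi2⟩ := abs_le.mp hi
  have hm : z ∈ auxS x := by
    refine ⟨?_, ?_, ?_⟩ <;> nlinarith
  have hz : z ≠ 0 := by
    rintro rfl; simp at h4; linarith
  rw [hw z hm hz, add_div, add_div]
  have hT : 0 < |z.re| := by linarith
  have hzT : |z.re| ≤ ‖z‖ := Complex.abs_re_le_norm z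
  have hx1 : 0 < x - 1 := by linarith
  refine (norm_add₃_le).trans ?_
  gcongr ?_ + ?_ + ?_
  · rw [norm_div, norm_div, norm_one]
    have h1 : π * (x - 1) ≤ ‖z + π * x * Complex.I‖ := by
      refine le_trans ?_ (Complex.abs_im_le_norm _)
      refine le_trans ?_ (le_abs_self _)
      simp
      linarith
    have h2 := aux_norm_cosh h4
    gcongr
  · rw [norm_div, norm_pow]
    gcongr
    nlinarith
  · rw [norm_div]
    gcongr

lemma aux_main (x : ℝ) (hx : 1 < x) : ∫ t : ℝ, (1 / (1 + Real.cosh t)) *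
        ((x - 1) / (t ^ 2 + (x - 1) ^ 2 * π ^ 2) - (x + 1) / (t ^ 2 + (x + 1) ^ 2 * π ^ 2))
      = 4 / (π ^ 2 * x ^ 2) := by
  have hp := Real.pi_pos
  obtain ⟨w, hwd, hw⟩ := aux_w x hx
  obtain ⟨C, hC⟩ := aux_bound x hx w hw
  have hF := aux_F_int x hx
  obtain ⟨hP, hPv⟩ := aux_int π hp
  have hP' := hP.const_mul (4 / (π ^ 2 * x ^ 2))
  have hH := hF.sub hP'
  have hlim := MeasureTheory.intervalIntegral_tendsto_integral hH
    (Filter.tendsto_neg_atTop_atBot (G := ℝ)) Filter.tendsto_id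
  simp only [Pi.sub_apply, id] at hlim
  have hcont : ∀ b : ℝ, |b| ≤ π → Continuous (fun t : ℝ => w (t + b * Complex.I)) := by
    intro b hb
    obtain ⟨hi1, hi2⟩ := abs_le.mp hb
    refine hwd.continuousOn.comp_continuous (by fun_prop) ?_
    intro t
    refine ⟨?_, ?_, ?_⟩ <;> simp <;> nlinarith
  have hcm := hcont (-π) (by rw [abs_neg, abs_of_pos hp])
  have hcp := hcont π (by rw [abs_of_pos hp])
  have hz : Filter.Tendsto (fun T : ℝ => ∫ t in (-T)..T, ((1 / (1 + Real.cosh t)) *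
        ((x - 1) / (t ^ 2 + (x - 1) ^ 2 * π ^ 2) - (x + 1) / (t ^ 2 + (x + 1) ^ 2 * π ^ 2))
        - 4 / (π ^ 2 * x ^ 2) * (1 / (t ^ 2 + π ^ 2)))) Filter.atTop (nhds 0) := by
    have hb : Filter.Tendsto (fun T : ℝ => 4 * C / T) Filter.atTop (nhds 0) :=
      Filter.Tendsto.const_div_atTop Filter.tendsto_id _
    refine squeeze_zero_norm' ?_ hb
    filter_upwards [Filter.eventually_ge_atTop 4] with T hT
    have hrect := Complex.integral_boundary_rect_eq_zero_of_differentiableOn w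
      ⟨-T, -π⟩ ⟨T, π⟩ (hwd.mono (by
        intro z hz
        have := hz.2
        simp only [Set.mem_preimage, Set.uIcc_of_le (show -π ≤ π by linarith), Set.mem_Icc] at this
        refine ⟨?_, ?_, ?_⟩ <;> nlinarith))
    simp only [smul_eq_mul] at hrect
    have hv : ∀ r : ℝ, |r| = T → ‖∫ y : ℝ in (-π)..π, w (r + y * Complex.I)‖ ≤ C / T * (2 * π) := by
      intro r hr
      have := intervalIntegral.norm_integral_le_of_norm_le_const (a := -π) (b := π) (C := C / T)
        (f := fun y : ℝ => w (r + y * Complex.I)) (by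
          intro y hy
          rw [Set.uIoc_of_le (by linarith)] at hy
          have := hC (r + y * Complex.I) (by simp [hr, hT])
            (by simp; exact abs_le.mpr ⟨hy.1.le, hy.2⟩)
          simpa [hr] using this)
      rw [show |π - -π| = 2 * π by rw [abs_of_pos] <;> linarith] at this
      exact this
    have hv1 := hv T (abs_of_pos (by linarith))
    have hv2 := hv (-T) (by rw [abs_neg, abs_of_pos (by linarith)])
    have hsub : ∫ t in (-T)..T, (w (t + (-π : ℝ) * Complex.I) - w (t + (π:ℝ) * Complex.I)) =
        Complex.I * (∫ y : ℝ in (-π)..π, w ((-T : ℝ) + y * Complex.I))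
        - Complex.I * (∫ y : ℝ in (-π)..π, w (T + y * Complex.I)) := by
      rw [intervalIntegral.integral_sub (hcm.intervalIntegrable _ _) (hcp.intervalIntegrable _ _)]
      linear_combination hrect
    have hre : ∫ t in (-T)..T, ((1 / (1 + Real.cosh t)) *
        ((x - 1) / (t ^ 2 + (x - 1) ^ 2 * π ^ 2) - (x + 1) / (t ^ 2 + (x + 1) ^ 2 * π ^ 2))
        - 4 / (π ^ 2 * x ^ 2) * (1 / (t ^ 2 + π ^ 2))) =
        (Complex.I / π * ∫ t in (-T)..T,
          (w (t + (-π : ℝ) * Complex.I) - w (t + (π:ℝ) * Complex.I))).re := by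
      rw [← intervalIntegral.integral_const_mul, ← Complex.reCLM_apply,
        ← ContinuousLinearMap.intervalIntegral_comp_comm]
      · refine intervalIntegral.integral_congr fun t _ => ?_
        simp only [Complex.reCLM_apply]
        rw [aux_pt x hx w hw t]
      · exact (continuous_const.mul (hcm.sub hcp)).intervalIntegrable _ _
    rw [hre, hsub]
    refine (Complex.abs_re_le_norm _).trans ?_
    rw [norm_mul, norm_div, Complex.norm_I, Complex.norm_real, Real.norm_of_nonneg hp.le]
    have h5 := norm_sub_le (Complex.I * (∫ y : ℝ in (-π)..π, w ((-T : ℝ) + y * Complex.I)))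
      (Complex.I * (∫ y : ℝ in (-π)..π, w (T + y * Complex.I)))
    rw [norm_mul, norm_mul, Complex.norm_I, one_mul, one_mul] at h5
    calc _ ≤ 1 / π * (C / T * (2 * π) + C / T * (2 * π)) := by
          gcongr
          exact h5.trans (add_le_add hv2 hv1)
      _ = 4 * C / T := by field_simp; ring
  have h0 := tendsto_nhds_unique hlim hz
  have h1 := MeasureTheory.integral_sub hF hP'
  rw [h0, MeasureTheory.integral_const_mul, hPv, div_self hp.ne', mul_one] at h1
  linarith



/-- For `x > 1` not an integer, the integral
`∫_ℝ (1/(1+cosh t)) [ (x-1)/(t² + (x-1)²π²) - (x+1)/(t² + (x+1)²π²) ] dt`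
equals
`-(8/π²) Σ_{k=1}^∞ [ (2k-1)(x-1)/((x-1)² - (2k-1)²)² - (2k-1)(x+1)/((x+1)² - (2k-1)²)² ]`,
where the sum over `k ≥ 1` is written as a sum over `k : ℕ` via `k ↦ k + 1`
(so that `2k - 1` becomes `2k + 1`). -/
theorem integral_cosh_winding_residue_series (x : ℝ) (hx : 1 < x)
    (hxint : ∀ m : ℤ, x ≠ m) :
    ∫ t : ℝ, (1 / (1 + Real.cosh t)) *
        ((x - 1) / (t ^ 2 + (x - 1) ^ 2 * π ^ 2) - (x + 1) / (t ^ 2 + (x + 1) ^ 2 * π ^ 2))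
      = -(8 / π ^ 2) * ∑' k : ℕ,
          ((2 * (k : ℝ) + 1) * (x - 1) / ((x - 1) ^ 2 - (2 * (k : ℝ) + 1) ^ 2) ^ 2
            - (2 * (k : ℝ) + 1) * (x + 1) / ((x + 1) ^ 2 - (2 * (k : ℝ) + 1) ^ 2) ^ 2) := by
  rw [aux_main x hx, (aux_series x hxint).tsum_eq]
  have hp := Real.pi_pos
  have hx0 : x ≠ 0 := by linarith
  field_simp
  norm_num
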